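/- Suppose −1 < α < 0 and −(2+7√3)α⁴ + 2(15+√2−11√3+√6)α³ + 2(57+3√2−10√3+3√6)α² + 6(20+√2+√6)α + 24 > 0 (this holds exactly for α₋ < α < 0, where α₋ ≈ −0.194 is the smallest real root of the quartic). Then the 3D Lamé system is positive definite with weight Φ: for every u ∈ C_0^∞(ℝ³∖{0};ℝ³), ∫_{ℝ³}(Lu)·(Φu) dx ≥ 0. -/

import Mathlib

/-!
Write `w = x / |x|`, `β = α / (α + 2)`, `D k i = ∂ₖuᵢ`, `d = div u`, `q = w · D w`.

Integrating by parts in `∫ Lu · Φu / c_α` leaves, besides terms quadratic in `D`, lower order terms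
that have no sign and cannot be absorbed, since the Hardy constant of the weight `1 / |x|` is zero.
Up to divergences, however, they are `β` times the derivative of the weight in the divergence of
`|x|⁻¹ (d u - (u · ∇) u)`. The vector field `d u - (u · ∇) u` has divergence `d² - tr D²`, so
the lower order terms can be traded for `-β (d² - tr D²) / |x|`, and on `ℝ³ ∖ {0}`
`Lu · Φu / c_α = |x|⁻¹ (|D|² + β |D w|² + (α - β) d² + α β d q + β tr D²) + div (flux)`.
The flux is compactly supported away from the origin, so its divergence integrates to zero.

To bound the quadratic form from below, split `D` into its compression to the plane `w^⊥`, its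
`w w` entry `q` and the mixed entries. By Cauchy–Schwarz the compression can be replaced by the
multiple of the identity with the same trace `t = d - q`, and the mixed entries can be dropped.
Up to a positive factor this leaves `2 s² q² + c q t + s² t²` with `s = α + 1`,
`c = α (3 α + 2)`, which is nonnegative exactly when `c² ≤ 8 s⁴`; the quartic hypothesis forces
`α > -1/2`, where this holds.
-/

open MeasureTheory Metric Real Filter

noncomputable section

/-- `ℝ³` as Euclidean space. -/
abbrev E3 : Type := EuclideanSpace ℝ (Fin 3)

/-- Partial derivative `∂ᵢ f` on `ℝ³`. -/
def pd (i : Fin 3) (f : E3 → ℝ) (x : E3) : ℝ :=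
  fderiv ℝ f x (EuclideanSpace.single i 1)

/-- Laplacian on `ℝ³`. -/
def lap (f : E3 → ℝ) (x : E3) : ℝ := ∑ i, pd i (pd i f) x

/-- Divergence of a vector field on `ℝ³`. -/
def divg (u : E3 → Fin 3 → ℝ) (x : E3) : ℝ := ∑ k, pd k (fun y => u y k) x

/-- The 3D Lamé operator `(Lu)ᵢ = -Δuᵢ - α ∂ᵢ (div u)`. -/
def lame (α : ℝ) (u : E3 → Fin 3 → ℝ) (x : E3) (i : Fin 3) : ℝ :=
  - lap (fun y => u y i) x - α * pd i (divg u) x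

/-- The constant `c_α = (α+2)/(8π(α+1))`. -/
def cA (α : ℝ) : ℝ := (α + 2) / (8 * Real.pi * (α + 1))

/-- The fundamental matrix `Φ` of the 3D Lamé system:
`Φ_ij(x) = c_α |x|⁻¹ (δ_ij + (α/(α+2)) xᵢxⱼ/|x|²)`. -/
def Phi (α : ℝ) (x : E3) (i j : Fin 3) : ℝ :=
  cA α * ‖x‖⁻¹ * ((if i = j then (1 : ℝ) else 0) + (α / (α + 2)) * (x i * x j) / ‖x‖ ^ 2)

/-- `u ∈ C₀^∞(U; ℝ³)`: smooth, compactly supported, with support inside `U`. -/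
def IsTestOn (U : Set E3) (u : E3 → Fin 3 → ℝ) : Prop :=
  ContDiff ℝ (⊤ : ℕ∞) u ∧ HasCompactSupport u ∧ tsupport u ⊆ U

/-- `∫_{ℝ³} (Lu)·(Φ(·-y) u) dx`. -/
def lameEnergy (α : ℝ) (u : E3 → Fin 3 → ℝ) (y : E3) : ℝ :=
  ∫ x : E3, ∑ i, ∑ j, lame α u x i * Phi α (x - y) i j * u x j

section Algebra

open Matrix

section Trace

variable {n : Type*} [Fintype n]

lemma trace_transpose_mul_vecMulVec (D : Matrix n n ℝ) (a b : n → ℝ) :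
    trace (Dᵀ * vecMulVec a b) = a ⬝ᵥ D *ᵥ b := by
  rw [mul_vecMulVec, trace_vecMulVec, mulVec_transpose, dotProduct_mulVec]

lemma trace_mul_transpose_eq_sum (M N : Matrix n n ℝ) :
    trace (M * Nᵀ) = ∑ p : n × n, M p.1 p.2 * N p.1 p.2 := by
  simp [trace, mul_apply, Fintype.sum_prod_type]

lemma trace_mul_transpose_self_nonneg (M : Matrix n n ℝ) : 0 ≤ trace (M * Mᵀ) := by
  rw [trace_mul_transpose_eq_sum]
  exact Finset.sum_nonneg fun p _ => mul_self_nonneg _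

lemma trace_mul_transpose_sq_le (M N : Matrix n n ℝ) :
    trace (M * Nᵀ) ^ 2 ≤ trace (M * Mᵀ) * trace (N * Nᵀ) := by
  simp only [trace_mul_transpose_eq_sum, ← sq]
  exact Finset.sum_mul_sq_le_sq_mul_sq Finset.univ _ _

lemma trace_mul_self_le_trace_mul_transpose (M : Matrix n n ℝ) :
    trace (M * M) ≤ trace (M * Mᵀ) := by
  have h := trace_mul_transpose_self_nonneg (M - Mᵀ)
  have hT : trace (Mᵀ * Mᵀ) = trace (M * M) := by rw [← transpose_mul, trace_transpose]
  simp only [transpose_sub, transpose_transpose, sub_mul, mul_sub, trace_sub, hT,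
    trace_mul_comm Mᵀ M] at h
  linarith

/-- Only the symmetric part of `M` meets `S`, and on it the two traces agree. -/
lemma one_add_mul_trace_mul_sq_le {β : ℝ} (hβ : -1 ≤ β) (hβ' : β ≤ 1) (M : Matrix n n ℝ)
    {S : Matrix n n ℝ} (hS : S.IsSymm) :
    (1 + β) * trace (M * S) ^ 2 ≤ trace (S * S) * (trace (M * Mᵀ) + β * trace (M * M)) := by
  have hMM : trace (Mᵀ * Mᵀ) = trace (M * M) := by rw [← transpose_mul, trace_transpose]
  have hMS : trace (Mᵀ * S) = trace (M * S) := by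
    rw [← trace_transpose, transpose_mul, transpose_transpose, hS.eq, trace_mul_comm]
  have hCS := trace_mul_transpose_sq_le (M + Mᵀ) S
  simp only [transpose_add, transpose_transpose, add_mul, mul_add, trace_add, hS.eq, hMM, hMS,
    trace_mul_comm Mᵀ M] at hCS
  have hS0 : 0 ≤ trace (S * S) := by simpa only [hS.eq] using trace_mul_transpose_self_nonneg S
  nlinarith [mul_nonneg (mul_nonneg hS0 (sub_nonneg.mpr hβ'))
    (sub_nonneg.mpr (trace_mul_self_le_trace_mul_transpose M)),
    mul_le_mul_of_nonneg_left hCS (by linarith : 0 ≤ 1 + β)]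

lemma two_add_three_mul_sq_le {β q : ℝ} (hβ : β ^ 2 ≤ 1 + β) {a b w : n → ℝ}
    (hw : w ⬝ᵥ w = 1) (ha : a ⬝ᵥ w = q) (hb : b ⬝ᵥ w = q) :
    (2 + 3 * β) * q ^ 2 ≤ (1 + β) * (a ⬝ᵥ a) + b ⬝ᵥ b + 2 * β * (a ⬝ᵥ b) := by
  have h1 := dotProduct_star_self_nonneg (b - q • w + β • (a - q • w))
  have h2 := mul_nonneg (sub_nonneg.mpr hβ) (dotProduct_star_self_nonneg (a - q • w))
  simp only [star_trivial, dotProduct_add, add_dotProduct, dotProduct_sub, sub_dotProduct,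
    dotProduct_smul, smul_dotProduct, smul_eq_mul, hw, ha, hb, dotProduct_comm w,
    dotProduct_comm b a] at h1 h2
  linarith

lemma one_add_mul_trace_compression_sq_le {β : ℝ} (hβ : -1 ≤ β) (hβ' : β ≤ 1)
    (D : Matrix n n ℝ) {S : Matrix n n ℝ} (hS : S.IsSymm) (hSS : IsIdempotentElem S) :
    (1 + β) * trace (D * S) ^ 2 ≤
      trace S * (trace (D * S * Dᵀ * S) + β * trace (D * S * D * S)) := by
  have htr : trace (S * D * S * S) = trace (D * S) := by
    rw [mul_assoc, hSS.eq, mul_assoc, trace_mul_comm, mul_assoc, hSS.eq]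
  have hcomp (E : Matrix n n ℝ) : trace (S * D * S * (S * E * S)) = trace (D * S * E * S) :=
    calc trace (S * D * S * (S * E * S)) = trace (S * (D * (S * S) * E * S)) := by
          simp only [mul_assoc]
      _ = trace (D * (S * S) * E * (S * S)) := by rw [trace_mul_comm, mul_assoc _ S S]
      _ = trace (D * S * E * S) := by rw [hSS.eq]
  have h := one_add_mul_trace_mul_sq_le hβ hβ' (S * D * S) hS
  simpa only [transpose_mul, hS.eq, ← mul_assoc Dᵀ, htr, hSS.eq, ← mul_assoc S Dᵀ, hcomp] using h

end Trace

section OrthProj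

variable {n : Type*} [DecidableEq n]

/-- The matrix `1 - w wᵀ`; when `w` is a unit vector it is the orthogonal projection onto the
hyperplane `w^⊥`. -/
def orthProj (w : n → ℝ) : Matrix n n ℝ := 1 - vecMulVec w w

lemma orthProj_isSymm (w : n → ℝ) : (orthProj w).IsSymm := by
  simp [orthProj, IsSymm, transpose_vecMulVec]

variable [Fintype n]

lemma trace_mul_orthProj (M : Matrix n n ℝ) (w : n → ℝ) :
    trace (M * orthProj w) = trace M - w ⬝ᵥ M *ᵥ w := by
  simp [orthProj, mul_sub, mul_vecMulVec, trace_vecMulVec, dotProduct_comm]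

lemma orthProj_mul_self {w : n → ℝ} (hw : w ⬝ᵥ w = 1) : orthProj w * orthProj w = orthProj w := by
  simp [orthProj, sub_mul, mul_sub, vecMulVec_mul_vecMulVec, hw]

lemma trace_mul_orthProj_mul_orthProj (M N : Matrix n n ℝ) (w : n → ℝ) :
    trace (M * orthProj w * N * orthProj w) = trace (M * N) - w ⬝ᵥ M *ᵥ (N *ᵥ w)
      - w ⬝ᵥ N *ᵥ (M *ᵥ w) + (w ⬝ᵥ M *ᵥ w) * (w ⬝ᵥ N *ᵥ w) := by
  have hMN : trace (M * orthProj w * N) = trace (M * N) - w ⬝ᵥ N *ᵥ (M *ᵥ w) := by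
    rw [trace_mul_comm, ← mul_assoc, trace_mul_orthProj, trace_mul_comm, mulVec_mulVec]
  have hw : orthProj w *ᵥ (N *ᵥ w) = N *ᵥ w - (w ⬝ᵥ N *ᵥ w) • w := by
    rw [orthProj, sub_mulVec, one_mulVec, vecMulVec_mulVec, op_smul_eq_smul]
  rw [trace_mul_orthProj, hMN, ← mulVec_mulVec, ← mulVec_mulVec, hw, mulVec_sub, mulVec_smul,
    dotProduct_sub, dotProduct_smul, smul_eq_mul]
  ring

end OrthProj

/-- The quadratic form in the gradient matrix `D` that remains of `|x| (Lu · Φu) / c_α` after the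
removal of divergences, in the direction `w = x / |x|`; `β` stands for `α / (α + 2)`. -/
def gradForm (α β : ℝ) (w : Fin 3 → ℝ) (D : Matrix (Fin 3) (Fin 3) ℝ) : ℝ :=
  trace (D * Dᵀ) + β * (D *ᵥ w ⬝ᵥ D *ᵥ w) + (α - β) * trace D ^ 2
    + α * β * (trace D * (w ⬝ᵥ D *ᵥ w)) + β * trace (D * D)

lemma sq_le_one_add_of_sq_le {α β : ℝ} (hα : -1 < α)
    (h : (α * (3 * α + 2)) ^ 2 ≤ 8 * (α + 1) ^ 4) (hβ : β * (α + 2) = α) : β ^ 2 ≤ 1 + β := by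
  have hα2 : 0 < α + 2 := by linarith
  suffices hpos : 0 ≤ α ^ 2 + 6 * α + 4 by
    have : (1 + β - β ^ 2) * (α + 2) ^ 2 = α ^ 2 + 6 * α + 4 := by
      linear_combination (α + 2 - β * (α + 2) - α) * hβ
    have := nonneg_of_mul_nonneg_left (this ▸ hpos) (by positivity)
    linarith
  by_contra! hneg
  have hlarge : 4 * (α + 1) ^ 2 < α * (3 * α + 2) := by linarith
  have : (4 * (α + 1) ^ 2) ^ 2 < (α * (3 * α + 2)) ^ 2 := by gcongr
  have : 0 < (α + 1) ^ 4 := pow_pos (by linarith) 4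
  linarith

lemma quadratic_form_nonneg {s c : ℝ} (hs : 0 < s) (hc : c ^ 2 ≤ 8 * s ^ 4) (q t : ℝ) :
    0 ≤ 2 * s ^ 2 * q ^ 2 + c * (q * t) + s ^ 2 * t ^ 2 := by
  have hsq := mul_nonneg (sub_nonneg.mpr hc) (sq_nonneg t)
  refine nonneg_of_mul_nonneg_right (a := 8 * s ^ 2) ?_ (by positivity)
  linarith [sq_nonneg (4 * s ^ 2 * q + c * t)]

lemma gradForm_nonneg {α β : ℝ} (hα : -1 < α) (h : (α * (3 * α + 2)) ^ 2 ≤ 8 * (α + 1) ^ 4)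
    (hβ : β * (α + 2) = α) {w : Fin 3 → ℝ} (hw : w ⬝ᵥ w = 1) (D : Matrix (Fin 3) (Fin 3) ℝ) :
    0 ≤ gradForm α β w D := by
  have hβ₁ : -1 ≤ β := by nlinarith
  have hβ₂ : β ≤ 1 := by nlinarith
  set q := w ⬝ᵥ D *ᵥ w with hq
  have hDw : D *ᵥ w ⬝ᵥ w = q := dotProduct_comm _ _
  have hwD : w ᵥ* D ⬝ᵥ w = q := (dotProduct_mulVec _ _ _).symm
  have hproj := one_add_mul_trace_compression_sq_le hβ₁ hβ₂ D (orthProj_isSymm w)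
    (orthProj_mul_self hw)
  have hvec := two_add_three_mul_sq_le (sq_le_one_add_of_sq_le hα h hβ) hw hDw hwD
  have htr : trace (orthProj w) = 2 := by
    simp only [orthProj, trace_sub, trace_one, Fintype.card_fin, trace_vecMulVec, hw]
    norm_num
  have hDDT : trace (D * orthProj w * Dᵀ * orthProj w) =
      trace (D * Dᵀ) - w ᵥ* D ⬝ᵥ w ᵥ* D - D *ᵥ w ⬝ᵥ D *ᵥ w + q ^ 2 := by
    rw [trace_mul_orthProj_mul_orthProj, dotProduct_mulVec w D, dotProduct_mulVec w Dᵀ,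
      mulVec_transpose, vecMul_transpose, dotProduct_comm w (w ᵥ* D), hwD, ← hq, sq]
  have hDD : trace (D * orthProj w * D * orthProj w) =
      trace (D * D) - 2 * (D *ᵥ w ⬝ᵥ w ᵥ* D) + q ^ 2 := by
    rw [trace_mul_orthProj_mul_orthProj, dotProduct_mulVec w D, dotProduct_comm (w ᵥ* D), ← hq]
    ring
  rw [hDDT, hDD, htr, trace_mul_orthProj] at hproj
  set d := trace D
  have hscalar : 0 ≤ (α + 2) * ((1 + β) / 2 * (d - q) ^ 2 + (1 + 2 * β) * q ^ 2
      + (α - β) * d ^ 2 + α * β * (d * q)) := by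
    have := quadratic_form_nonneg (by linarith : 0 < α + 1) h q (d - q)
    linear_combination this - ((d - q) ^ 2 / 2 + 2 * q ^ 2 - d ^ 2 + α * (d * q)) * hβ
  have := nonneg_of_mul_nonneg_right hscalar (by linarith)
  unfold gradForm
  linarith

end Algebra

section Calculus

open Matrix

variable {f g : E3 → ℝ} {u v : E3 → Fin 3 → ℝ} {x : E3}

/-! ### Partial derivatives, gradients and divergences -/

lemma norm_inv_sq_mul_dotProduct_self (hx : x ≠ 0) : ‖x‖⁻¹ ^ 2 * (x.ofLp ⬝ᵥ x.ofLp) = 1 := by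
  have h : x.ofLp ⬝ᵥ x.ofLp = ‖x‖ ^ 2 := by
    rw [EuclideanSpace.real_norm_sq_eq]
    simp [dotProduct, sq]
  rw [h, ← mul_pow, inv_mul_cancel₀ (norm_ne_zero_iff.mpr hx), one_pow]

lemma pd_mul (k : Fin 3) (hf : DifferentiableAt ℝ f x) (hg : DifferentiableAt ℝ g x) :
    pd k (fun y => f y * g y) x = f x * pd k g x + pd k f x * g x := by
  simp [pd, fderiv_fun_mul hf hg, mul_comm]

lemma pd_sum {ι : Type*} [Fintype ι] {f : ι → E3 → ℝ} {x : E3} (k : Fin 3)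
    (hf : ∀ i, DifferentiableAt ℝ (f i) x) :
    pd k (fun y => ∑ i, f i y) x = ∑ i, pd k (f i) x := by
  simp [pd, fderiv_fun_sum fun i _ => hf i]

lemma pd_comm (hf : ContDiffAt ℝ 2 f x) (i j : Fin 3) : pd i (pd j f) x = pd j (pd i f) x := by
  have hd : DifferentiableAt ℝ (fderiv ℝ f) x :=
    (hf.fderiv_right (m := 1) (by norm_num)).differentiableAt one_ne_zero
  have hpd (a b : Fin 3) : pd a (pd b f) x =
      fderiv ℝ (fderiv ℝ f) x (EuclideanSpace.single a 1) (EuclideanSpace.single b 1) := by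
    unfold pd
    rw [fderiv_clm_apply hd (differentiableAt_const _)]
    simp
  rw [hpd, hpd]
  exact (hf.isSymmSndFDerivAt (by simp)).eq _ _

lemma contDiffAt_pd (hf : ContDiffAt ℝ 2 f x) (k : Fin 3) : ContDiffAt ℝ 1 (pd k f) x :=
  (hf.fderiv_right (m := 1) (by norm_num)).clm_apply contDiffAt_const

lemma continuous_pd (hf : ContDiff ℝ 1 f) (k : Fin 3) : Continuous (pd k f) :=
  (hf.continuous_fderiv one_ne_zero).clm_apply continuous_const

/-- The gradient of a scalar function on `ℝ³`, as a coordinate vector. -/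
def grad (f : E3 → ℝ) (x : E3) : Fin 3 → ℝ := fun k => pd k f x

/-- The gradient matrix of a vector field, with the derivative as row index: its `(k, i)` entry is
`∂ₖuᵢ`, so this is the transpose of the usual Jacobian. -/
def gradMatrix (u : E3 → Fin 3 → ℝ) (x : E3) : Matrix (Fin 3) (Fin 3) ℝ :=
  Matrix.of fun k i => pd k (fun y => u y i) x

lemma divg_eq_trace (u : E3 → Fin 3 → ℝ) (x : E3) : divg u x = trace (gradMatrix u x) := rfl

lemma grad_mul (hf : DifferentiableAt ℝ f x) (hg : DifferentiableAt ℝ g x) :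
    grad (fun y => f y * g y) x = f x • grad g x + g x • grad f x := by
  ext k
  simp [grad, pd_mul k hf hg, mul_comm]

lemma grad_const_mul (c : ℝ) (hf : DifferentiableAt ℝ f x) :
    grad (fun y => c * f y) x = c • grad f x := by
  ext k
  simp [grad, pd, fderiv_const_mul hf]

lemma hasFDerivAt_norm_of_ne_zero {E : Type*} [NormedAddCommGroup E] [InnerProductSpace ℝ E]
    {x : E} (hx : x ≠ 0) : HasFDerivAt (fun y : E => ‖y‖) (‖x‖⁻¹ • innerSL ℝ x) x := by
  have h0 : ‖x‖ ≠ 0 := norm_ne_zero_iff.mpr hx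
  have h := (hasStrictFDerivAt_norm_sq x).hasFDerivAt.sqrt (pow_ne_zero 2 h0)
  simp only [Real.sqrt_sq (norm_nonneg _)] at h
  have hsmul : (1 / (2 * ‖x‖)) • 2 • innerSL ℝ x = ‖x‖⁻¹ • innerSL ℝ x := by
    rw [← Nat.cast_smul_eq_nsmul ℝ, smul_smul]
    congr 1
    push_cast
    field_simp
  rwa [hsmul] at h

@[fun_prop]
lemma contDiffAt_dotProduct {E ι : Type*} [NormedAddCommGroup E] [NormedSpace ℝ E] [Fintype ι]
    {u v : E → ι → ℝ} {x : E} {m : WithTop ℕ∞} (hu : ContDiffAt ℝ m u x)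
    (hv : ContDiffAt ℝ m v x) : ContDiffAt ℝ m (fun y => u y ⬝ᵥ v y) x :=
  ContDiffAt.sum fun i _ => (contDiffAt_pi.mp hu i).mul (contDiffAt_pi.mp hv i)

lemma contDiffAt_norm_inv (hx : x ≠ 0) : ContDiffAt ℝ 1 (fun y : E3 => ‖y‖⁻¹) x :=
  (contDiffAt_norm ℝ hx).inv (norm_ne_zero_iff.mpr hx)

lemma grad_norm_inv_pow (m : ℕ) (hx : x ≠ 0) :
    grad (fun y => ‖y‖⁻¹ ^ m) x = (-m * ‖x‖⁻¹ ^ (m + 2)) • x.ofLp := by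
  have h0 : ‖x‖ ≠ 0 := norm_ne_zero_iff.mpr hx
  have h := ((hasDerivAt_inv h0).fun_pow m).comp_hasFDerivAt x (hasFDerivAt_norm_of_ne_zero hx)
  have hpow : m * ‖x‖⁻¹ ^ (m - 1) * -(‖x‖ ^ 2)⁻¹ * ‖x‖⁻¹ = -m * ‖x‖⁻¹ ^ (m + 2) := by
    cases m with
    | zero => simp
    | succ m =>
      rw [Nat.add_sub_cancel]
      ring
  ext k
  have hk : grad (fun y => ‖y‖⁻¹ ^ m) x k = _ :=
    congrArg (fun L : E3 →L[ℝ] ℝ => L (EuclideanSpace.single k 1)) h.fderiv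
  rw [hk, ← hpow]
  simp [EuclideanSpace.inner_single_right, mul_assoc]

lemma grad_norm_inv (hx : x ≠ 0) : grad (fun y => ‖y‖⁻¹) x = -‖x‖⁻¹ ^ 3 • x.ofLp := by
  simpa using grad_norm_inv_pow 1 hx

lemma grad_dotProduct (hu : DifferentiableAt ℝ u x) (hv : DifferentiableAt ℝ v x) :
    grad (fun y => u y ⬝ᵥ v y) x = gradMatrix u x *ᵥ v x + gradMatrix v x *ᵥ u x := by
  ext k
  have hu' := differentiableAt_pi.mp hu
  have hv' := differentiableAt_pi.mp hv
  simp only [grad, dotProduct, pd_sum k fun i => (hu' i).fun_mul (hv' i),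
    pd_mul k (hu' _) (hv' _), Finset.sum_add_distrib]
  simp [gradMatrix, mulVec, dotProduct, mul_comm, add_comm]

lemma gradMatrix_add (hu : DifferentiableAt ℝ u x) (hv : DifferentiableAt ℝ v x) :
    gradMatrix (fun y => u y + v y) x = gradMatrix u x + gradMatrix v x := by
  ext k i
  have := fderiv_fun_add (differentiableAt_pi.mp hu i) (differentiableAt_pi.mp hv i)
  simp [gradMatrix, pd, this]

lemma gradMatrix_sub (hu : DifferentiableAt ℝ u x) (hv : DifferentiableAt ℝ v x) :
    gradMatrix (fun y => u y - v y) x = gradMatrix u x - gradMatrix v x := by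
  ext k i
  have := fderiv_fun_sub (differentiableAt_pi.mp hu i) (differentiableAt_pi.mp hv i)
  simp [gradMatrix, pd, this]

lemma gradMatrix_smul (hf : DifferentiableAt ℝ f x) (hu : DifferentiableAt ℝ u x) :
    gradMatrix (fun y => f y • u y) x = f x • gradMatrix u x + vecMulVec (grad f x) (u x) := by
  ext k i
  simp [gradMatrix, pd_mul k hf (differentiableAt_pi.mp hu i), vecMulVec_apply, grad]

lemma gradMatrix_ofLp (x : E3) : gradMatrix WithLp.ofLp x = 1 := by
  ext k i
  have : HasFDerivAt (fun y : E3 => y i) (EuclideanSpace.proj i : E3 →L[ℝ] ℝ) x :=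
    (EuclideanSpace.proj i : E3 →L[ℝ] ℝ).hasFDerivAt
  simp [gradMatrix, pd, this.fderiv, one_apply, eq_comm]

lemma divg_sub (hu : DifferentiableAt ℝ u x)
    (hv : DifferentiableAt ℝ v x) : divg (fun y => u y - v y) x = divg u x - divg v x := by
  simp only [divg_eq_trace, gradMatrix_sub hu hv, trace_sub]

lemma divg_smul (hf : DifferentiableAt ℝ f x) (hu : DifferentiableAt ℝ u x) :
    divg (fun y => f y • u y) x = f x * divg u x + grad f x ⬝ᵥ u x := by
  simp only [divg_eq_trace, gradMatrix_smul hf hu, trace_add, trace_smul, trace_vecMulVec,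
    smul_eq_mul]

lemma contDiffAt_gradMatrix_apply (hu : ContDiffAt ℝ 2 u x) (k i : Fin 3) :
    ContDiffAt ℝ 1 (fun y => gradMatrix u y k i) x :=
  contDiffAt_pd (contDiffAt_pi.mp hu i) k

lemma contDiffAt_divg (hu : ContDiffAt ℝ 2 u x) : ContDiffAt ℝ 1 (divg u) x :=
  ContDiffAt.sum fun i _ => contDiffAt_gradMatrix_apply hu i i

lemma grad_divg (hu : ContDiffAt ℝ 2 u x) (k : Fin 3) :
    grad (divg u) x k = ∑ i, pd k (pd i fun y => u y i) x :=
  pd_sum k fun i => (contDiffAt_gradMatrix_apply hu i i).differentiableAt one_ne_zero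

lemma divg_gradMatrix_mulVec (hu : ContDiffAt ℝ 2 u x) (hv : DifferentiableAt ℝ v x) :
    divg (fun y => gradMatrix u y *ᵥ v y) x =
      (fun i => lap (fun y => u y i) x) ⬝ᵥ v x + trace ((gradMatrix u x)ᵀ * gradMatrix v x) := by
  have hD (k i : Fin 3) : DifferentiableAt ℝ (pd k fun y => u y i) x :=
    (contDiffAt_gradMatrix_apply hu k i).differentiableAt one_ne_zero
  have hv' := differentiableAt_pi.mp hv
  have hpd (k : Fin 3) : pd k (fun y => (gradMatrix u y *ᵥ v y) k) x =
      ∑ i, (pd k (fun y => u y i) x * pd k (fun y => v y i) x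
        + pd k (pd k fun y => u y i) x * v x i) := by
    simp only [← pd_mul k (hD k _) (hv' _)]
    exact pd_sum k fun i => (hD k i).fun_mul (hv' i)
  simp only [divg, hpd, Finset.sum_add_distrib]
  simp only [lap, dotProduct, trace, diag, mul_apply,
    Finset.sum_mul, transpose_apply, gradMatrix, of_apply]
  rw [add_comm, Finset.sum_comm]
  congr 1
  exact Finset.sum_comm

lemma divg_vecMul_gradMatrix (hu : ContDiffAt ℝ 2 u x) :
    divg (fun y => u y ᵥ* gradMatrix u y) x =
      trace (gradMatrix u x * gradMatrix u x) + u x ⬝ᵥ grad (divg u) x := by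
  have hD (k i : Fin 3) : DifferentiableAt ℝ (pd k fun y => u y i) x :=
    (contDiffAt_gradMatrix_apply hu k i).differentiableAt one_ne_zero
  have hu' := differentiableAt_pi.mp (hu.differentiableAt two_ne_zero)
  have hpd (k : Fin 3) : pd k (fun y => (u y ᵥ* gradMatrix u y) k) x =
      ∑ i, (u x i * pd i (pd k fun y => u y k) x
        + pd k (fun y => u y i) x * pd i (fun y => u y k) x) := by
    simp only [pd_comm (contDiffAt_pi.mp hu k) _ k, ← pd_mul k (hu' _) (hD _ k)]
    exact pd_sum k fun i => (hu' i).fun_mul (hD i k)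
  simp only [divg, hpd, Finset.sum_add_distrib]
  simp only [dotProduct, trace, diag, mul_apply,
    gradMatrix, of_apply, grad_divg hu, Finset.mul_sum]
  rw [add_comm, Finset.sum_comm (f := fun k i => u x i * _)]

lemma divg_mul_norm_inv_pow_smul_ofLp (m : ℕ) (hf : DifferentiableAt ℝ f x) (hx : x ≠ 0) :
    divg (fun y => (f y * ‖y‖⁻¹ ^ m) • y.ofLp) x =
      ‖x‖⁻¹ ^ m * (grad f x ⬝ᵥ x.ofLp + (3 - m) * f x) := by
  have hP : DifferentiableAt ℝ (fun y : E3 => ‖y‖⁻¹ ^ m) x :=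
    ((contDiffAt_norm_inv hx).pow m).differentiableAt one_ne_zero
  rw [divg_smul (hf.fun_mul hP) (by fun_prop), grad_mul hf hP, grad_norm_inv_pow m hx,
    divg_eq_trace, gradMatrix_ofLp]
  simp only [trace_one, Fintype.card_fin, add_dotProduct, smul_dotProduct, smul_eq_mul]
  linear_combination -m * f x * ‖x‖⁻¹ ^ m * norm_inv_sq_mul_dotProduct_self hx

/-! ### The Lamé operator against the weighted field -/

/-- The radial moment `x · u(x)`. -/
def radial (u : E3 → Fin 3 → ℝ) (x : E3) : ℝ := x.ofLp ⬝ᵥ u x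

lemma radial_eq (u : E3 → Fin 3 → ℝ) (x : E3) : radial u x = x.ofLp ⬝ᵥ u x := rfl

/-- The weighted field `Φu`, without the scalar factor `c_α` and with `β` in place of
`α / (α + 2)`. -/
def weighted (β : ℝ) (u : E3 → Fin 3 → ℝ) (x : E3) : Fin 3 → ℝ :=
  ‖x‖⁻¹ • u x + (β * radial u x * ‖x‖⁻¹ ^ 3) • x.ofLp

/-- The null Lagrangian field `(div u) u - (u · ∇) u`: its divergence
`(div u)² - tr (∇u)²` contains no second derivatives of `u`. -/
def nullField (u : E3 → Fin 3 → ℝ) (x : E3) : Fin 3 → ℝ :=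
  divg u x • u x - u x ᵥ* gradMatrix u x

/-- The flux whose divergence is the difference between `Lu · Φu / c_α` and `|x|⁻¹` times
`gradForm`. The first term carries the null Lagrangian, the next two come from Green's formula for
`L`, and the last two absorb the lower order terms that are gradients of squares. -/
def flux (α β : ℝ) (u : E3 → Fin 3 → ℝ) (x : E3) : Fin 3 → ℝ :=
  (β * ‖x‖⁻¹) • nullField u x - gradMatrix u x *ᵥ weighted β u x
    - (α * divg u x) • weighted β u x
    - (1 / 2 * (u x ⬝ᵥ u x) * ‖x‖⁻¹ ^ 3) • x.ofLp
    - (3 / 2 * β * (radial u x * radial u x) * ‖x‖⁻¹ ^ 5) • x.ofLp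

lemma contDiffAt_radial {m : WithTop ℕ∞} (hu : ContDiffAt ℝ m u x) : ContDiffAt ℝ m (radial u) x :=
  contDiffAt_dotProduct (by fun_prop) hu

lemma differentiableAt_radial (hu : DifferentiableAt ℝ u x) : DifferentiableAt ℝ (radial u) x := by
  unfold radial dotProduct
  fun_prop

lemma contDiffAt_weighted (β : ℝ) (hu : ContDiffAt ℝ 1 u x)
    (hx : x ≠ 0) : ContDiffAt ℝ 1 (weighted β u) x := by
  have hP := contDiffAt_norm_inv hx
  have hR := contDiffAt_radial hu
  unfold weighted
  fun_prop

lemma contDiffAt_gradMatrix_mulVec (hu : ContDiffAt ℝ 2 u x)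
    (hv : ContDiffAt ℝ 1 v x) : ContDiffAt ℝ 1 (fun y => gradMatrix u y *ᵥ v y) x :=
  contDiffAt_pi.mpr fun k => contDiffAt_dotProduct
    (contDiffAt_pi.mpr fun i => contDiffAt_gradMatrix_apply hu k i) hv

lemma contDiffAt_nullField (hu : ContDiffAt ℝ 2 u x) : ContDiffAt ℝ 1 (nullField u) x := by
  have hu1 : ContDiffAt ℝ 1 u x := hu.of_le one_le_two
  refine ((contDiffAt_divg hu).smul hu1).sub (contDiffAt_pi.mpr fun i => ?_)
  exact contDiffAt_dotProduct hu1
    (contDiffAt_pi.mpr fun k => contDiffAt_gradMatrix_apply hu k i)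

lemma contDiffAt_flux (α β : ℝ) (hu : ContDiffAt ℝ 2 u x)
    (hx : x ≠ 0) : ContDiffAt ℝ 1 (flux α β u) x := by
  have hu1 : ContDiffAt ℝ 1 u x := hu.of_le one_le_two
  have hP := contDiffAt_norm_inv hx
  have hV := contDiffAt_weighted β hu1 hx
  have hDV := contDiffAt_gradMatrix_mulVec hu hV
  have hd := contDiffAt_divg hu
  have hN := contDiffAt_nullField hu
  have hR := contDiffAt_radial hu1
  unfold flux
  fun_prop

lemma grad_radial (hu : DifferentiableAt ℝ u x) :
    grad (radial u) x = u x + gradMatrix u x *ᵥ x.ofLp := by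
  refine (grad_dotProduct (u := WithLp.ofLp) (by fun_prop) hu).trans ?_
  rw [gradMatrix_ofLp, one_mulVec]

lemma divg_nullField (hu : ContDiffAt ℝ 2 u x) :
    divg (nullField u) x = divg u x ^ 2 - trace (gradMatrix u x * gradMatrix u x) := by
  have hu' := hu.differentiableAt two_ne_zero
  have hd := (contDiffAt_divg hu).differentiableAt one_ne_zero
  have hN := (contDiffAt_nullField hu).differentiableAt one_ne_zero
  have hW : (fun y => u y ᵥ* gradMatrix u y) = fun y => divg u y • u y - nullField u y := by
    simp [nullField]
  have h := divg_vecMul_gradMatrix hu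
  rw [hW, divg_sub (hd.fun_smul hu') hN, divg_smul hd hu', dotProduct_comm] at h
  linarith

lemma gradMatrix_weighted (β : ℝ) (hu : DifferentiableAt ℝ u x) (hx : x ≠ 0) :
    gradMatrix (weighted β u) x = ‖x‖⁻¹ • gradMatrix u x - ‖x‖⁻¹ ^ 3 • vecMulVec x.ofLp (u x)
      + (β * radial u x * ‖x‖⁻¹ ^ 3) • (1 : Matrix (Fin 3) (Fin 3) ℝ)
      + vecMulVec ((β * ‖x‖⁻¹ ^ 3) • (u x + gradMatrix u x *ᵥ x.ofLp)
        - (3 * β * ‖x‖⁻¹ ^ 5 * radial u x) • x.ofLp) x.ofLp := by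
  have hP := (contDiffAt_norm_inv hx).differentiableAt one_ne_zero
  have hR := differentiableAt_radial hu
  have hf : DifferentiableAt ℝ (fun y => β * radial u y * ‖y‖⁻¹ ^ 3) x := by fun_prop
  have hgrad : grad (fun y => β * radial u y * ‖y‖⁻¹ ^ 3) x =
      (β * ‖x‖⁻¹ ^ 3) • (u x + gradMatrix u x *ᵥ x.ofLp)
        - (3 * β * ‖x‖⁻¹ ^ 5 * radial u x) • x.ofLp := by
    rw [grad_mul (hR.const_mul β) (hP.fun_pow 3), grad_norm_inv_pow 3 hx, grad_const_mul β hR,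
      grad_radial hu]
    module
  have hofLp : gradMatrix (fun y => y.ofLp) x = 1 := gradMatrix_ofLp x
  unfold weighted
  rw [gradMatrix_add (by fun_prop) (by fun_prop), gradMatrix_smul hP hu,
    gradMatrix_smul hf (by fun_prop), hgrad, grad_norm_inv hx, hofLp]
  simp only [neg_smul, neg_vecMulVec, smul_vecMulVec, smul_add]
  module

lemma divg_weighted (β : ℝ) (hu : DifferentiableAt ℝ u x) (hx : x ≠ 0) :
    divg (weighted β u) x = ‖x‖⁻¹ * divg u x - ‖x‖⁻¹ ^ 3 * radial u x
      + β * ‖x‖⁻¹ ^ 3 * (radial u x + x.ofLp ⬝ᵥ gradMatrix u x *ᵥ x.ofLp) := by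
  rw [divg_eq_trace, gradMatrix_weighted β hu hx]
  simp only [trace_add, trace_sub, trace_smul, trace_vecMulVec, trace_one, Fintype.card_fin,
    dotProduct_comm _ x.ofLp, dotProduct_add, dotProduct_sub, dotProduct_smul, smul_eq_mul,
    ← divg_eq_trace, ← radial_eq]
  linear_combination -3 * β * ‖x‖⁻¹ ^ 3 * radial u x * norm_inv_sq_mul_dotProduct_self hx

lemma trace_transpose_gradMatrix_mul_gradMatrix_weighted (β : ℝ)
    (hu : DifferentiableAt ℝ u x) (hx : x ≠ 0) :
    trace ((gradMatrix u x)ᵀ * gradMatrix (weighted β u) x) =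
      ‖x‖⁻¹ * trace (gradMatrix u x * (gradMatrix u x)ᵀ)
      - ‖x‖⁻¹ ^ 3 * (x.ofLp ⬝ᵥ gradMatrix u x *ᵥ u x)
      + β * ‖x‖⁻¹ ^ 3 * (radial u x * divg u x + u x ⬝ᵥ gradMatrix u x *ᵥ x.ofLp
         + gradMatrix u x *ᵥ x.ofLp ⬝ᵥ gradMatrix u x *ᵥ x.ofLp)
       - 3 * β * ‖x‖⁻¹ ^ 5 * (radial u x * x.ofLp ⬝ᵥ gradMatrix u x *ᵥ x.ofLp) := by
  rw [divg_eq_trace, gradMatrix_weighted β hu hx]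
  simp only [mul_add, mul_sub, Matrix.mul_smul, mul_one, trace_add, trace_sub, trace_smul,
    trace_transpose_mul_vecMulVec, add_dotProduct, sub_dotProduct, smul_dotProduct, smul_eq_mul,
    trace_transpose, trace_mul_comm (gradMatrix u x)ᵀ (gradMatrix u x)]
  ring

lemma divg_norm_inv_smul_nullField (β : ℝ) (hu : ContDiffAt ℝ 2 u x) (hx : x ≠ 0) :
    divg (fun y => (β * ‖y‖⁻¹) • nullField u y) x =
      β * ‖x‖⁻¹ * (divg u x ^ 2 - trace (gradMatrix u x * gradMatrix u x))
      - β * ‖x‖⁻¹ ^ 3 * (radial u x * divg u x - u x ⬝ᵥ gradMatrix u x *ᵥ x.ofLp) := by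
  have hP := (contDiffAt_norm_inv hx).differentiableAt one_ne_zero
  have hN := (contDiffAt_nullField hu).differentiableAt one_ne_zero
  rw [divg_smul (hP.const_mul β) hN, divg_nullField hu, grad_const_mul β hP, grad_norm_inv hx,
    nullField]
  simp only [smul_dotProduct, dotProduct_sub, dotProduct_smul, smul_eq_mul, ← radial_eq,
    dotProduct_comm x.ofLp (_ ᵥ* _), ← dotProduct_mulVec]
  ring

lemma divg_flux {α β : ℝ} (hu : ContDiffAt ℝ 2 u x) (hx : x ≠ 0) :
    divg (flux α β u) x =
      β * ‖x‖⁻¹ * (divg u x ^ 2 - trace (gradMatrix u x * gradMatrix u x))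
      - β * ‖x‖⁻¹ ^ 3 * (radial u x * divg u x - u x ⬝ᵥ gradMatrix u x *ᵥ x.ofLp)
      - divg (fun y => gradMatrix u y *ᵥ weighted β u y) x
      - divg (fun y => (α * divg u y) • weighted β u y) x
      - ‖x‖⁻¹ ^ 3 * (x.ofLp ⬝ᵥ gradMatrix u x *ᵥ u x)
      - 3 * β * ‖x‖⁻¹ ^ 5 * (radial u x * x.ofLp ⬝ᵥ gradMatrix u x *ᵥ x.ofLp) := by
  have hu1 : ContDiffAt ℝ 1 u x := hu.of_le one_le_two
  have hu' := hu1.differentiableAt one_ne_zero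
  have hP := (contDiffAt_norm_inv hx).differentiableAt one_ne_zero
  have hV := contDiffAt_weighted β hu1 hx
  have hV' := hV.differentiableAt one_ne_zero
  have hDV := (contDiffAt_gradMatrix_mulVec hu hV).differentiableAt one_ne_zero
  have hd := (contDiffAt_divg hu).differentiableAt one_ne_zero
  have hN := (contDiffAt_nullField hu).differentiableAt one_ne_zero
  have hR := differentiableAt_radial hu'
  have huu : DifferentiableAt ℝ (fun y => u y ⬝ᵥ u y) x :=
    (contDiffAt_dotProduct hu1 hu1).differentiableAt one_ne_zero
  unfold flux
  rw [divg_sub (by fun_prop) (by fun_prop), divg_sub (by fun_prop) (by fun_prop),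
    divg_sub (by fun_prop) (by fun_prop), divg_sub (by fun_prop) hDV,
    divg_norm_inv_smul_nullField β hu hx, divg_mul_norm_inv_pow_smul_ofLp 3 (by fun_prop) hx,
    divg_mul_norm_inv_pow_smul_ofLp 5 (by fun_prop) hx, grad_const_mul _ huu,
    grad_const_mul _ (by fun_prop), grad_mul hR hR, grad_dotProduct hu' hu', grad_radial hu']
  simp only [dotProduct_comm _ x.ofLp, dotProduct_add, dotProduct_smul, smul_eq_mul, ← radial_eq]
  push_cast
  ring

lemma lame_dotProduct (α : ℝ) (hu : ContDiffAt ℝ 2 u x) (hv : DifferentiableAt ℝ v x) :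
    lame α u x ⬝ᵥ v x = trace ((gradMatrix u x)ᵀ * gradMatrix v x) + α * (divg u x * divg v x)
      - divg (fun y => gradMatrix u y *ᵥ v y) x - divg (fun y => (α * divg u y) • v y) x := by
  have hd := (contDiffAt_divg hu).differentiableAt one_ne_zero
  rw [divg_gradMatrix_mulVec hu hv, divg_smul (hd.const_mul α) hv, grad_const_mul α hd]
  have : lame α u x = -(fun i => lap (fun y => u y i) x) - α • grad (divg u) x := rfl
  rw [this, sub_dotProduct, neg_dotProduct, smul_dotProduct, smul_eq_mul]
  ring

lemma lame_dotProduct_weighted_eq {α β : ℝ} (hβ : β * (α + 2) = α)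
    (hu : ContDiffAt ℝ 2 u x) (hx : x ≠ 0) :
    lame α u x ⬝ᵥ weighted β u x =
      ‖x‖⁻¹ * gradForm α β (‖x‖⁻¹ • x.ofLp) (gradMatrix u x) + divg (flux α β u) x := by
  have hu1 : ContDiffAt ℝ 1 u x := hu.of_le one_le_two
  have hu' := hu1.differentiableAt one_ne_zero
  have hV := (contDiffAt_weighted β hu1 hx).differentiableAt one_ne_zero
  rw [lame_dotProduct α hu hV, divg_flux hu hx, divg_weighted β hu' hx,
    trace_transpose_gradMatrix_mul_gradMatrix_weighted β hu' hx]
  simp only [gradForm, mulVec_smul, dotProduct_smul, smul_dotProduct, smul_eq_mul, ← divg_eq_trace]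
  linear_combination ‖x‖⁻¹ ^ 3 * radial u x * divg u x * hβ

/-! ### Integration of divergences -/

lemma integrable_pd (hf : ContDiff ℝ 1 f) (hc : HasCompactSupport f) (k : Fin 3) :
    Integrable (pd k f) :=
  (continuous_pd hf k).integrable_of_hasCompactSupport (hc.fderiv_apply ℝ _)

lemma integral_pd_eq_zero (hf : ContDiff ℝ 1 f) (hc : HasCompactSupport f)
    (k : Fin 3) : ∫ x, pd k f x = 0 := by
  have h := integral_mul_fderiv_eq_neg_fderiv_mul_of_integrable (μ := (volume : Measure E3))
    (f := fun _ => 1) (g := f) (v := EuclideanSpace.single k (1 : ℝ)) (by simp)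
    (by simp only [one_mul]; exact integrable_pd hf hc k)
    (by simpa using hf.continuous.integrable_of_hasCompactSupport hc)
    (fun _ _ => differentiableAt_const _) (fun x _ => hf.differentiable one_ne_zero x)
  unfold pd
  simpa only [one_mul, fderiv_const_apply, _root_.zero_apply, zero_mul, integral_zero,
    neg_zero] using h

lemma hasCompactSupport_apply {X ι : Type*} [TopologicalSpace X] {F : X → ι → ℝ}
    (hc : HasCompactSupport F) (k : ι) : HasCompactSupport fun x => F x k :=
  hc.comp_left (g := fun v : ι → ℝ => v k) rfl

lemma integrable_divg {F : E3 → Fin 3 → ℝ} (hF : ContDiff ℝ 1 F) (hc : HasCompactSupport F) :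
    Integrable (divg F) :=
  integrable_finsetSum _ fun k _ =>
    integrable_pd (contDiff_pi.mp hF k) (hasCompactSupport_apply hc k) k

lemma integral_divg_eq_zero {F : E3 → Fin 3 → ℝ} (hF : ContDiff ℝ 1 F)
    (hc : HasCompactSupport F) : ∫ x, divg F x = 0 := by
  have hF' := contDiff_pi.mp hF
  have hc' := hasCompactSupport_apply hc
  unfold divg
  rw [integral_finsetSum _ fun k _ => integrable_pd (hF' k) (hc' k) k]
  exact Finset.sum_eq_zero fun k _ => integral_pd_eq_zero (hF' k) (hc' k) k

/-! ### The weighted energy -/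

lemma contDiff_of_forall_mem_tsupport {E F : Type*} [NormedAddCommGroup E] [NormedSpace ℝ E]
    [NormedAddCommGroup F] [NormedSpace ℝ F] {f : E → F} {m : WithTop ℕ∞}
    (hf : ∀ x ∈ tsupport f, ContDiffAt ℝ m f x) : ContDiff ℝ m f :=
  (contMDiff_of_tsupport fun x hx => (hf x hx).contMDiffAt).contDiff

lemma tsupport_subset_of_forall_notMem {X E F : Type*} [TopologicalSpace X] [Zero E] [Zero F]
    {f : X → E} {g : X → F} (h : ∀ x ∉ tsupport f, g x = 0) : tsupport g ⊆ tsupport f :=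
  closure_minimal (fun x hx => by_contra fun hx' => hx (h x hx')) (isClosed_tsupport f)

lemma gradMatrix_eq_zero_of_notMem_tsupport (hx : x ∉ tsupport u) : gradMatrix u x = 0 := by
  ext k i
  have h : (fun y => u y i) =ᶠ[nhds x] fun _ => (0 : ℝ) := by
    filter_upwards [notMem_tsupport_iff_eventuallyEq.mp hx] with y hy
    simp [hy]
  simp [gradMatrix, pd, h.fderiv_eq]

lemma tsupport_weighted_subset (β : ℝ) (u : E3 → Fin 3 → ℝ) :
    tsupport (weighted β u) ⊆ tsupport u :=
  tsupport_subset_of_forall_notMem fun x hx => by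
    simp [weighted, radial, image_eq_zero_of_notMem_tsupport hx]

lemma tsupport_flux_subset (α β : ℝ) (u : E3 → Fin 3 → ℝ) : tsupport (flux α β u) ⊆ tsupport u :=
  tsupport_subset_of_forall_notMem fun x hx => by
    simp [flux, nullField, weighted, radial, divg_eq_trace,
      image_eq_zero_of_notMem_tsupport hx, gradMatrix_eq_zero_of_notMem_tsupport hx]

lemma continuous_lame (α : ℝ) (hu : ContDiff ℝ 2 u) : Continuous (lame α u) := by
  have hlap (i : Fin 3) : Continuous (lap fun y => u y i) :=
    continuous_finsetSum _ fun k _ =>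
      continuous_pd (contDiff_iff_contDiffAt.mpr fun _ =>
        contDiffAt_gradMatrix_apply hu.contDiffAt k i) k
  have hdiv : ContDiff ℝ 1 (divg u) :=
    contDiff_iff_contDiffAt.mpr fun _ => contDiffAt_divg hu.contDiffAt
  exact continuous_pi fun i => (hlap i).neg.sub (continuous_const.mul (continuous_pd hdiv i))

lemma integrable_lame_dotProduct_weighted (α β : ℝ) (hu : ContDiff ℝ 2 u)
    (hc : HasCompactSupport u) (h0 : 0 ∉ tsupport u) :
    Integrable fun x => lame α u x ⬝ᵥ weighted β u x := by
  have hV : ContDiff ℝ 1 (weighted β u) :=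
    contDiff_of_forall_mem_tsupport fun x hx =>
      contDiffAt_weighted β (hu.contDiffAt.of_le one_le_two)
        (ne_of_mem_of_not_mem (tsupport_weighted_subset β u hx) h0)
  have hVc : HasCompactSupport (weighted β u) :=
    hc.of_isClosed_subset (isClosed_tsupport _) (tsupport_weighted_subset β u)
  refine ((continuous_lame α hu).dotProduct hV.continuous).integrable_of_hasCompactSupport ?_
  exact hVc.mono fun x hx hVx => hx (by simp only [hVx, dotProduct_zero])

lemma integral_lame_dotProduct_weighted_nonneg {α β : ℝ} (hα : -1 < α)
    (h : (α * (3 * α + 2)) ^ 2 ≤ 8 * (α + 1) ^ 4) (hβ : β * (α + 2) = α) (hu : ContDiff ℝ 2 u)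
    (hc : HasCompactSupport u) (h0 : 0 ∉ tsupport u) : 0 ≤ ∫ x, lame α u x ⬝ᵥ weighted β u x := by
  have hF : ContDiff ℝ 1 (flux α β u) :=
    contDiff_of_forall_mem_tsupport fun x hx =>
      contDiffAt_flux α β hu.contDiffAt (ne_of_mem_of_not_mem (tsupport_flux_subset α β u hx) h0)
  have hFc : HasCompactSupport (flux α β u) :=
    hc.of_isClosed_subset (isClosed_tsupport _) (tsupport_flux_subset α β u)
  have hpos : ∀ᵐ x, 0 ≤ lame α u x ⬝ᵥ weighted β u x - divg (flux α β u) x := by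
    filter_upwards [Measure.ae_ne volume 0] with x hx
    rw [lame_dotProduct_weighted_eq hβ hu.contDiffAt hx, add_sub_cancel_right]
    have hw : (‖x‖⁻¹ • x.ofLp) ⬝ᵥ (‖x‖⁻¹ • x.ofLp) = 1 := by
      rw [smul_dotProduct, dotProduct_smul, smul_smul, ← sq]
      exact norm_inv_sq_mul_dotProduct_self hx
    exact mul_nonneg (inv_nonneg.mpr (norm_nonneg x)) (gradForm_nonneg hα h hβ hw _)
  calc 0 ≤ ∫ x, (lame α u x ⬝ᵥ weighted β u x - divg (flux α β u) x) :=
        integral_nonneg_of_ae hpos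
    _ = ∫ x, lame α u x ⬝ᵥ weighted β u x := by
      rw [integral_sub (integrable_lame_dotProduct_weighted α β hu hc h0) (integrable_divg hF hFc),
        integral_divg_eq_zero hF hFc, sub_zero]

lemma sum_lame_mul_Phi_mul (α : ℝ) (u : E3 → Fin 3 → ℝ) (x : E3) :
    ∑ i, ∑ j, lame α u x i * Phi α x i j * u x j =
      cA α * (lame α u x ⬝ᵥ weighted (α / (α + 2)) u x) := by
  simp only [Phi, weighted, radial, dotProduct, Fin.sum_univ_three, Fin.reduceEq, ↓reduceIte,
    Pi.add_apply, Pi.smul_apply, smul_eq_mul]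
  ring

lemma cA_nonneg {α : ℝ} (hα : -1 < α) : 0 ≤ cA α :=
  div_nonneg (by linarith) (mul_nonneg (by positivity) (by linarith))

end Calculus

section Parameter

lemma neg_half_lt_of_quartic_pos {α : ℝ} (hα₁ : -1 < α) (hα₂ : α < 0)
    (h : 0 < -(2 + 7 * √3) * α ^ 4 + 2 * (15 + √2 - 11 * √3 + √6) * α ^ 3
      + 2 * (57 + 3 * √2 - 10 * √3 + 3 * √6) * α ^ 2 + 6 * (20 + √2 + √6) * α + 24) :
    -1 / 2 < α := by
  have h2 : 1 ≤ √2 := Real.le_sqrt_of_sq_le (by norm_num)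
  have h2' : √2 ≤ 1.5 := Real.sqrt_le_iff.mpr (by norm_num)
  have h3 : 1.7 ≤ √3 := Real.le_sqrt_of_sq_le (by norm_num)
  have h3' : √3 ≤ 1.75 := Real.sqrt_le_iff.mpr (by norm_num)
  have h6 : 2 ≤ √6 := Real.le_sqrt_of_sq_le (by norm_num)
  have h6' : √6 ≤ 2.5 := Real.sqrt_le_iff.mpr (by norm_num)
  by_contra! hα
  have hcube : 0 ≤ (-α) ^ 3 := pow_nonneg (by linarith) 3
  have hcube' : (-α) ^ 3 ≤ 1 := pow_le_one₀ (by linarith) (by linarith)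
  have hquartic : 0 ≤ (2 + 7 * √3) * α ^ 4 := by positivity
  have hcubic : 2 * (15 + √2 - 11 * √3 + √6) * α ^ 3 ≤ 2.5 := by
    linarith [mul_le_mul_of_nonneg_right
      (by linarith : -(2 * (15 + √2 - 11 * √3 + √6)) ≤ 2.5) hcube]
  have hquadratic : 2 * (57 + 3 * √2 - 10 * √3 + 3 * √6) * α ^ 2 ≤ 104 * α ^ 2 :=
    mul_le_mul_of_nonneg_right (by linarith) (sq_nonneg α)
  have hlinear : 6 * (20 + √2 + √6) * α ≤ 138 * α :=
    mul_le_mul_of_nonpos_right (by linarith) hα₂.le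
  linarith [mul_nonneg (by linarith : 0 ≤ α + 1) (by linarith : 0 ≤ -1 / 2 - α)]

lemma sq_mul_le_of_neg_half_lt {α : ℝ} (hα₁ : -1 / 2 < α) (hα₂ : α < 0) :
    (α * (3 * α + 2)) ^ 2 ≤ 8 * (α + 1) ^ 4 := by
  have hlarge : (1 / 2) ^ 4 ≤ (α + 1) ^ 4 := pow_le_pow_left₀ (by norm_num) (by linarith) 4
  have hsmall : (α * (3 * α + 2)) ^ 2 ≤ (1 / 2) ^ 2 := by
    apply sq_le_sq' <;> nlinarith
  linarith

end Parameter

/-- The condition `hα` is equivalent to pointwise nonnegativity of the quadratic form `gradForm`;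
numerically it reads `-0.747… ≤ α ≤ 22.06…`. -/
theorem lame_weighted_positive_definite_of_neg_general {α : ℝ} (hα₁ : -1 < α)
    (hα : (α * (3 * α + 2)) ^ 2 ≤ 8 * (α + 1) ^ 4) {u : E3 → Fin 3 → ℝ} (hu : ContDiff ℝ 2 u)
    (hc : HasCompactSupport u) (h0 : (0 : E3) ∉ tsupport u) :
    0 ≤ ∫ x : E3, ∑ i, ∑ j, lame α u x i * Phi α x i j * u x j := by
  simp only [sum_lame_mul_Phi_mul, integral_const_mul]
  exact mul_nonneg (cA_nonneg hα₁) (integral_lame_dotProduct_weighted_nonneg hα₁ hα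
    (div_mul_cancel₀ α (by linarith)) hu hc h0)

/-- For `-1 < α < 0` satisfying the quartic inequality (i.e. `α₋ < α < 0`),
the 3D Lamé system is positive definite with weight `Φ`. -/
theorem lame_weighted_positive_definite_of_neg
    (α : ℝ) (hα₁ : -1 < α) (hα₂ : α < 0)
    (h : 0 < -(2 + 7 * Real.sqrt 3) * α ^ 4 + 2 * (15 + Real.sqrt 2 - 11 * Real.sqrt 3 + Real.sqrt 6) * α ^ 3 + 2 * (57 + 3 * Real.sqrt 2 - 10 * Real.sqrt 3 + 3 * Real.sqrt 6) * α ^ 2 + 6 * (20 + Real.sqrt 2 + Real.sqrt 6) * α + 24)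
    (u : E3 → Fin 3 → ℝ) (hu : IsTestOn ({(0 : E3)}ᶜ) u) :
    0 ≤ ∫ x : E3, ∑ i, ∑ j, lame α u x i * Phi α x i j * u x j := by
  have hα := neg_half_lt_of_quartic_pos hα₁ hα₂ h
  exact lame_weighted_positive_definite_of_neg_general hα₁ (sq_mul_le_of_neg_half_lt hα hα₂)
    (contDiff_infty.mp hu.1 2) hu.2.1 fun h0 => hu.2.2 h0 rfl
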